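/- arXiv:2104.09030 — 3 statements merged into one kernel-verified Lean document; each statement's English description precedes it below -/
import Mathlib

section
/- Let g ≥ 1 and let Q ∈ GL_g(ℚ) be irreducible. Then the action of Γ_Q := {γ ∈ SL_g(ℤ) : γQγ⁻¹ = Q} on ℚ^g ∖ {0} is free: for x ∈ ℚ^g ∖ {0} and γ ∈ Γ_Q, γx = x implies γ = 1. -/
open Matrix

/-!
If a subspace `W ≠ 0` is stable under `f`, then the minimal polynomial of `f|_W` is a nonconstant
divisor of the characteristic polynomial of `f`. When the latter is irreducible the two are
associated, and comparing degrees gives `dim V ≤ dim W`, so `W = V`. The eigenspaces of an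
endomorphism commuting with `f` are stable under `f`; hence as soon as one of them is nonzero, it
is all of `V`.
-/

open Module Polynomial

section Endomorphism

variable {R M : Type*} [CommSemiring R] [AddCommMonoid M] [Module R M]

theorem coe_aeval_restrict_apply {f : End R M} {W : Submodule R M} (hW : ∀ w ∈ W, f w ∈ W)
    (p : R[X]) (w : W) : (aeval (f.restrict hW) p w : M) = aeval f p w := by
  induction p using Polynomial.induction_on' with
  | add p q hp hq => simp only [map_add, LinearMap.add_apply, Submodule.coe_add, hp, hq]
  | monomial n a => simp [aeval_monomial, End.pow_restrict n, LinearMap.restrict_apply]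

variable {K V : Type*} [Field K] [AddCommGroup V] [Module K V] [FiniteDimensional K V]

theorem minpoly_restrict_dvd_charpoly {f : End K V} {W : Submodule K V}
    (hW : ∀ w ∈ W, f w ∈ W) : minpoly K (f.restrict hW) ∣ f.charpoly := by
  refine minpoly.dvd K _ (LinearMap.ext fun w ↦ Subtype.ext ?_)
  rw [coe_aeval_restrict_apply, f.aeval_self_charpoly]
  rfl

theorem natDegree_minpoly_le_finrank (f : End K V) :
    (minpoly K f).natDegree ≤ finrank K V :=
  f.charpoly_natDegree ▸ natDegree_le_of_dvd f.minpoly_dvd_charpoly f.charpoly_monic.ne_zero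

theorem eq_top_of_invariant_of_irreducible_charpoly {f : End K V}
    (hf : Irreducible f.charpoly) {W : Submodule K V} (hW : ∀ w ∈ W, f w ∈ W) (hW₀ : W ≠ ⊥) :
    W = ⊤ := by
  have : Nontrivial W := Submodule.nontrivial_iff_ne_bot.mpr hW₀
  have hdvd : f.charpoly ∣ minpoly K (f.restrict hW) :=
    (hf.dvd_iff.mp (minpoly_restrict_dvd_charpoly hW)).resolve_left (minpoly.not_isUnit K _) |>.dvd
  refine Submodule.eq_top_of_finrank_eq (W.finrank_le.antisymm ?_)
  calc
    finrank K V = f.charpoly.natDegree := f.charpoly_natDegree.symm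
    _ ≤ (minpoly K (f.restrict hW)).natDegree :=
      natDegree_le_of_dvd hdvd (minpoly.ne_zero (f.restrict hW).isIntegral)
    _ ≤ finrank K W := natDegree_minpoly_le_finrank _

theorem eq_algebraMap_of_commute_of_hasEigenvalue {f g : End K V} (hf : Irreducible f.charpoly)
    (hcomm : Commute g f) {μ : K} (hμ : g.HasEigenvalue μ) : g = algebraMap K (End K V) μ := by
  have htop : g.eigenspace μ = ⊤ :=
    eq_top_of_invariant_of_irreducible_charpoly hf
      (End.mapsTo_genEigenspace_of_comm hcomm μ 1) hμ
  ext v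
  exact End.mem_eigenspace_iff.mp (htop ▸ Submodule.mem_top)

end Endomorphism

theorem commute_of_mul_mul_inv_eq {R n : Type*} [CommRing R] [Fintype n] [DecidableEq n]
    {A B : Matrix n n R} (hA : IsUnit A.det) (h : A * B * A⁻¹ = B) : Commute A B :=
  calc
    A * B = A * B * A⁻¹ * A := (nonsing_inv_mul_cancel_right A _ hA).symm
    _ = B * A := by rw [h]

theorem stmt4_general {K n : Type*} [Field K] [Fintype n] [DecidableEq n] {Q γ : Matrix n n K}
    (hirr : Irreducible Q.charpoly) (hcomm : Commute γ Q) {x : n → K} (hx : x ≠ 0)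
    (hfix : γ *ᵥ x = x) : γ = 1 := by
  have hirr' : Irreducible (toLinAlgEquiv' Q).charpoly := (charpoly_toLin' Q).symm ▸ hirr
  have heigen : End.HasEigenvalue (toLinAlgEquiv' γ) 1 :=
    End.hasEigenvalue_of_hasEigenvector (x := x) ⟨by simpa using hfix, hx⟩
  apply (toLinAlgEquiv' (R := K) (n := n)).injective
  simpa using eq_algebraMap_of_commute_of_hasEigenvalue hirr' (hcomm.map toLinAlgEquiv') heigen

/-- For `g ≥ 1` and `Q ∈ GL_g(ℚ)` irreducible, the action of
`Γ_Q = {γ ∈ SL_g(ℤ) : γQγ⁻¹ = Q}` on `ℚ^g ∖ {0}` is free. -/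
theorem stmt4 (g : ℕ) (hg : 1 ≤ g) (Q : Matrix (Fin g) (Fin g) ℚ)
    (hQ : IsUnit Q) (hirr : Irreducible Q.charpoly)
    (γ : Matrix (Fin g) (Fin g) ℚ)
    (hγint : ∀ i j, ∃ n : ℤ, γ i j = (n : ℚ)) (hdet : γ.det = 1)
    (hstab : γ * Q * γ⁻¹ = Q)
    (x : Fin g → ℚ) (hx : x ≠ 0) (hfix : γ *ᵥ x = x) :
    γ = 1 :=
  stmt4_general hirr (commute_of_mul_mul_inv_eq (hdet ▸ isUnit_one) hstab) hx hfix
end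

section
/- Let g ≥ 1, let Q ∈ GL_g(ℚ) be irreducible, and let α ∈ ℚ^g ∖ {0}. Then there exists k₀ ≥ 0 such that H_+^{(k)} = H_-^{(k)} = ∅ for all k ≥ k₀ + 1, and ℝ^g ∖ {0} is the disjoint union ⨆_{k=0}^{k₀} (H_+^{(k)} ⊔ H_-^{(k)}). -/
open Matrix

/-- The set `H_+^{(k)} = {x : ⟨x,(Qᵀ)^k α⟩ > 0, ⟨x,(Qᵀ)^j α⟩ = 0 for j < k}`. -/
def Hplus {g : ℕ} (Q : Matrix (Fin g) (Fin g) ℚ) (α : Fin g → ℚ) (k : ℕ) :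
    Set (Fin g → ℝ) :=
  {x | 0 < x ⬝ᵥ ((Q.map ((↑) : ℚ → ℝ))ᵀ ^ k *ᵥ fun j => (α j : ℝ)) ∧
       ∀ j < k, x ⬝ᵥ ((Q.map ((↑) : ℚ → ℝ))ᵀ ^ j *ᵥ fun j => (α j : ℝ)) = 0}

/-- The set `H_-^{(k)} = {x : ⟨x,(Qᵀ)^k α⟩ < 0, ⟨x,(Qᵀ)^j α⟩ = 0 for j < k}`. -/
def Hminus {g : ℕ} (Q : Matrix (Fin g) (Fin g) ℚ) (α : Fin g → ℚ) (k : ℕ) :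
    Set (Fin g → ℝ) :=
  {x | x ⬝ᵥ ((Q.map ((↑) : ℚ → ℝ))ᵀ ^ k *ᵥ fun j => (α j : ℝ)) < 0 ∧
       ∀ j < k, x ⬝ᵥ ((Q.map ((↑) : ℚ → ℝ))ᵀ ^ j *ᵥ fun j => (α j : ℝ)) = 0}

/-! If the characteristic polynomial of `A` is irreducible and `v ≠ 0`, then `p ↦ p(A) v` is
injective on polynomials of degree less than `n`, hence surjective by dimension: `v` is cyclic. By
Cayley–Hamilton `v, A v, …, A^(n-1) v` then generate `K^n`, so every unit vector is a combination of
them with coefficients in `K`. This survives any base change `K → R`: a vector over `R` orthogonal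
to all of them vanishes. A nonzero `x` therefore has a first nonzero pairing `⟨x, A^k v⟩`, with
`k < n`, and its sign selects the one stratum containing `x`. -/

section SignStrata

variable {X R : Type*} [Zero R] [LinearOrder R]

/-- The points at which the sequence of functions `f` takes its first nonzero value at index `k`
and this value is positive; for `f k x = ⟨x, (Qᵀ)^k α⟩` this is `H_+^{(k)}`. -/
def posStratum (f : ℕ → X → R) (k : ℕ) : Set X :=
  {x | 0 < f k x ∧ ∀ j < k, f j x = 0}

/-- The points at which the sequence of functions `f` takes its first nonzero value at index `k`
and this value is negative; for `f k x = ⟨x, (Qᵀ)^k α⟩` this is `H_-^{(k)}`. -/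
def negStratum (f : ℕ → X → R) (k : ℕ) : Set X :=
  {x | f k x < 0 ∧ ∀ j < k, f j x = 0}

lemma existsUnique_mem_stratum {f : ℕ → X → R} {x : X} {N : ℕ} (h : ∃ j ≤ N, f j x ≠ 0) :
    ∃! p : ℕ × Bool, p.1 ≤ N ∧ x ∈ if p.2 then posStratum f p.1 else negStratum f p.1 := by
  classical
  obtain ⟨j, hjN, hj⟩ := h
  have hex : ∃ k, f k x ≠ 0 := ⟨j, hj⟩
  obtain ⟨k, hkN, hk, hzero⟩ : ∃ k ≤ N, f k x ≠ 0 ∧ ∀ i < k, f i x = 0 :=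
    ⟨Nat.find hex, (Nat.find_min' hex hj).trans hjN, Nat.find_spec hex,
      fun i hi => not_not.1 (Nat.find_min hex hi)⟩
  have hfirst {l : ℕ} (hl : f l x ≠ 0) (hlzero : ∀ i < l, f i x = 0) : l = k :=
    le_antisymm (not_lt.1 fun hkl => hk (hlzero k hkl)) (not_lt.1 fun hlk => hl (hzero l hlk))
  refine ⟨(k, decide (0 < f k x)), ⟨hkN, ?_⟩, ?_⟩
  · rcases hk.lt_or_gt with hneg | hpos
    · simpa [hneg.not_gt] using show x ∈ negStratum f k from ⟨hneg, hzero⟩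
    · simpa [hpos] using show x ∈ posStratum f k from ⟨hpos, hzero⟩
  · rintro ⟨l, _ | _⟩ ⟨-, hl⟩
    · obtain rfl := hfirst hl.1.ne hl.2
      simpa using hl.1.le
    · obtain rfl := hfirst hl.1.ne' hl.2
      simpa using hl.1

end SignStrata

open Polynomial

section Krylov

variable {n K R : Type*} [Fintype n] [DecidableEq n]

/-- `v` is a cyclic vector of `A` if the Krylov vectors `v, A v, A² v, …` span the whole space. The
span is encoded as the set of all `p(A) v` for polynomials `p`. -/
def IsCyclicVector [CommSemiring K] (A : Matrix n n K) (v : n → K) : Prop :=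
  ∀ w : n → K, ∃ p : K[X], aeval A p *ᵥ v = w

lemma charpoly_dvd_of_aeval_mulVec_eq_zero [Field K] {A : Matrix n n K}
    (hA : Irreducible A.charpoly) {v : n → K} (hv : v ≠ 0) {p : K[X]}
    (hp : aeval A p *ᵥ v = 0) : A.charpoly ∣ p := by
  by_contra hdvd
  obtain ⟨a, b, hab⟩ : IsCoprime A.charpoly p := hA.coprime_iff_not_dvd.2 hdvd
  refine hv ?_
  calc v = aeval A (a * A.charpoly + b * p) *ᵥ v := by rw [hab, map_one, one_mulVec]
    _ = 0 := by
      rw [map_add, map_mul, map_mul, aeval_self_charpoly, mul_zero, zero_add, ← mulVec_mulVec, hp,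
        mulVec_zero]

theorem isCyclicVector_of_irreducible_charpoly [Field K] {A : Matrix n n K}
    (hA : Irreducible A.charpoly) {v : n → K} (hv : v ≠ 0) : IsCyclicVector A v := by
  let T : degreeLT K (Fintype.card n) →ₗ[K] n → K :=
    ((mulVecBilin K K).flip v ∘ₗ (aeval A).toLinearMap).domRestrict _
  have hinj : Function.Injective T := by
    rw [injective_iff_map_eq_zero]
    rintro ⟨p, hp⟩ (hpv : aeval A p *ᵥ v = 0)
    refine Subtype.ext <|
      eq_zero_of_dvd_of_degree_lt (charpoly_dvd_of_aeval_mulVec_eq_zero hA hv hpv) ?_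
    rwa [charpoly_degree_eq_dim, ← mem_degreeLT]
  have hfin : FiniteDimensional K (degreeLT K (Fintype.card n)) :=
    .equiv (degreeLTEquiv K (Fintype.card n)).symm
  have hdim : Module.finrank K (degreeLT K (Fintype.card n)) = Module.finrank K (n → K) := by
    rw [(degreeLTEquiv K _).finrank_eq, Module.finrank_fin_fun, Module.finrank_fintype_fun_eq_card]
  intro w
  obtain ⟨p, hp⟩ := (LinearMap.injective_iff_surjective_of_finrank_eq_finrank hdim).1 hinj w
  exact ⟨p, hp⟩

/-- The pairing `⟨x, A^j v⟩` of a vector `x` over `R` with the `j`-th Krylov vector of `A` and `v`,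
whose entries lie in `K` and are moved to `R` along `φ`. The vector `x` comes last, so that
`krylovPairing φ A v` is a sequence of functions as in `posStratum` and `negStratum`. -/
def krylovPairing [Semiring K] [Semiring R] (φ : K →+* R) (A : Matrix n n K) (v : n → K) (j : ℕ)
    (x : n → R) : R :=
  x ⬝ᵥ (A.map φ ^ j *ᵥ (φ ∘ v))

lemma krylovPairing_zero [Semiring K] [Semiring R] (φ : K →+* R) (A : Matrix n n K) (v : n → K)
    (j : ℕ) : krylovPairing φ A v j 0 = 0 :=
  zero_dotProduct _

lemma krylovPairing_eq_dotProduct_comp [Semiring K] [Semiring R] (φ : K →+* R)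
    (A : Matrix n n K) (v : n → K) (j : ℕ) (x : n → R) :
    krylovPairing φ A v j x = x ⬝ᵥ (φ ∘ (A ^ j *ᵥ v)) := by
  have hpow : (A ^ j).map φ = A.map φ ^ j := map_pow φ.mapMatrix A j
  rw [krylovPairing, ← hpow]
  exact congrArg (x ⬝ᵥ ·) (funext fun i => (φ.map_mulVec (A ^ j) v i).symm)

lemma dotProduct_comp_aeval_mulVec [CommSemiring K] [CommSemiring R] (φ : K →+* R)
    (A : Matrix n n K) (v : n → K) (p : K[X]) (x : n → R) :
    x ⬝ᵥ (φ ∘ (aeval A p *ᵥ v)) = p.sum fun j c => φ c * krylovPairing φ A v j x := by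
  have hcomp : φ ∘ (aeval A p *ᵥ v) = ∑ j ∈ p.support, φ (p.coeff j) • (φ ∘ (A ^ j *ᵥ v)) := by
    ext i
    simp [aeval_def, eval₂_eq_sum, Polynomial.sum, ← Algebra.smul_def, sum_mulVec, smul_mulVec]
  simp only [hcomp, dotProduct_sum, dotProduct_smul, smul_eq_mul, krylovPairing_eq_dotProduct_comp,
    Polynomial.sum]

theorem IsCyclicVector.eq_zero_of_krylovPairing_eq_zero [CommRing K] [CommRing R] {φ : K →+* R}
    {A : Matrix n n K} {v : n → K} (hv : IsCyclicVector A v) {x : n → R}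
    (hx : ∀ j < Fintype.card n, krylovPairing φ A v j x = 0) : x = 0 := by
  nontriviality R
  have hK : Nontrivial K := φ.domain_nontrivial
  ext i
  obtain ⟨p, hp⟩ := hv (Pi.single i 1)
  rw [aeval_eq_aeval_mod_charpoly] at hp
  have hdeg : (p %ₘ A.charpoly).degree < Fintype.card n := by
    simpa using degree_modByMonic_lt p A.charpoly_monic
  calc x i = x ⬝ᵥ (φ ∘ Pi.single i 1) := by
        have hsingle : φ ∘ Pi.single i 1 = Pi.single i 1 := by
          ext j
          simpa using Pi.apply_single (fun _ => φ) (fun _ => map_zero φ) i 1 j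
        rw [hsingle, dotProduct_single_one]
    _ = (p %ₘ A.charpoly).sum fun j c => φ c * krylovPairing φ A v j x := by
        rw [← hp, dotProduct_comp_aeval_mulVec]
    _ = 0 := Finset.sum_eq_zero fun j hj => by
        have hj : j < Fintype.card n := by
          exact_mod_cast (le_degree_of_mem_supp j hj).trans_lt hdeg
        simp only [hx j hj, mul_zero]

end Krylov

theorem stmt8_general {n K R : Type*} [Fintype n] [DecidableEq n] [CommRing K] [CommRing R]
    [LinearOrder R] (φ : K →+* R) {A : Matrix n n K} {v : n → K} (hv : IsCyclicVector A v) :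
    ∃ k₀ : ℕ,
      (∀ k, k₀ + 1 ≤ k → posStratum (krylovPairing φ A v) k = ∅ ∧
        negStratum (krylovPairing φ A v) k = ∅) ∧
      ∀ x : n → R, x ≠ 0 →
        ∃! p : ℕ × Bool, p.1 ≤ k₀ ∧ x ∈ if p.2 then posStratum (krylovPairing φ A v) p.1
          else negStratum (krylovPairing φ A v) p.1 := by
  have hzero {x : n → R} {k : ℕ} (hk : Fintype.card n - 1 + 1 ≤ k)
      (hx : ∀ j < k, krylovPairing φ A v j x = 0) : krylovPairing φ A v k x = 0 := by
    rw [hv.eq_zero_of_krylovPairing_eq_zero fun j hj => hx j (by lia), krylovPairing_zero]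
  refine ⟨Fintype.card n - 1, fun k hk => ⟨?_, ?_⟩, fun x hx => existsUnique_mem_stratum ?_⟩
  · exact Set.eq_empty_of_forall_notMem fun x ⟨hpos, hx⟩ => hpos.ne' (hzero hk hx)
  · exact Set.eq_empty_of_forall_notMem fun x ⟨hneg, hx⟩ => hneg.ne (hzero hk hx)
  · contrapose! hx
    exact hv.eq_zero_of_krylovPairing_eq_zero fun j hj => hx j (by lia)

/-- for irreducible `Q` and `α ∈ ℚ^g ∖ {0}` there is `k₀` with
`H_±^{(k)} = ∅` for `k ≥ k₀ + 1`, and `ℝ^g ∖ {0}` is the disjoint union of the sets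
`H_+^{(k)}, H_-^{(k)}` for `k ≤ k₀` (each nonzero `x` lies in exactly one of them). -/
theorem stmt8 (g : ℕ) (hg : 1 ≤ g) (Q : Matrix (Fin g) (Fin g) ℚ)
    (hQ : IsUnit Q) (hirr : Irreducible Q.charpoly)
    (α : Fin g → ℚ) (hα : α ≠ 0) :
    ∃ k₀ : ℕ,
      (∀ k, k₀ + 1 ≤ k → Hplus Q α k = ∅ ∧ Hminus Q α k = ∅) ∧
      ∀ x : Fin g → ℝ, x ≠ 0 →
        ∃! p : ℕ × Bool, p.1 ≤ k₀ ∧ x ∈ (if p.2 then Hplus Q α p.1 else Hminus Q α p.1) :=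
  stmt8_general (Rat.castHom ℝ)
    (isCyclicVector_of_irreducible_charpoly (A := Qᵀ) (by rwa [charpoly_transpose]) hα)
end

section
/- Let g ≥ 1, let a₁,…,a_g ∈ ℂ with Re aᵢ > 0 for all i, and let k₁,…,k_g ∈ ℤ_{≥0} with |k| := k₁ + ⋯ + k_g. Then ∫_{Δ^{g−1}} (∏_{i=1}^{g} tᵢ^{kᵢ}) · (Σ_{i=1}^{g} tᵢ aᵢ)^{−(g+|k|)} dt₂⋯dt_g = (k₁!⋯k_g!)/(g+|k|−1)! · ∏_{i=1}^{g} aᵢ^{−(kᵢ+1)}, where the integral is over Δ^{g−1} := {(t₂,…,t_g) ∈ ℝ^{g−1} : tᵢ ≥ 0, Σ_{i=2}^{g} tᵢ ≤ 1} and t₁ := 1 − Σ_{i=2}^{g} tᵢ. (This is the Hurwitz/Feynman parametrization formula; it is equivalent to the integral of ∏ᵢ⟨ξᵢ*,y⟩^{kᵢ}·ω(y)/⟨x,y⟩^{g+|k|} over the affine (g−1)-simplex with vertices ξ₁,…,ξ_g, with aᵢ = ⟨x,ξᵢ⟩, after pulling back, in which case the right-hand side acquires the factor det(ξ₁,…,ξ_g).)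 -/
open MeasureTheory

/-- The barycentric completion of `(t₂,…,t_g) ∈ ℝ^{g-1}`: the tuple
`(t₁, t₂, …, t_g)` with `t₁ := 1 − Σ_{i=2}^{g} tᵢ` (here `g = m + 1`). -/
noncomputable def fullT (m : ℕ) (t : Fin m → ℝ) : Fin (m + 1) → ℝ :=
  Fin.cons (1 - ∑ j, t j) t

/-! Integrate `∏ xᵢ ^ kᵢ * exp (-∑ xᵢ * aᵢ)` over the orthant `x ≥ 0` in two ways. As a product of
one-variable integrals it equals `∏ Γ(kᵢ + 1) * aᵢ ^ (-(kᵢ + 1))`. In the cone coordinates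
`x = s • fullT m t`, `dx = s ^ m ds dt`, the integral over `s` for fixed `t` is, by homogeneity of
the monomial, a Gamma integral with rate `∑ tᵢ * aᵢ`, with value
`Γ(m + 1 + ∑ kᵢ) * (∑ tᵢ * aᵢ) ^ (-(m + 1 + ∑ kᵢ))` times the monomial in `t`. -/

open Complex Set Filter Topology

section GammaIntegral

variable {s z : ℂ}

theorem norm_cpow_mul_cexp_neg_mul {x : ℝ} (hx : 0 < x) :
    ‖(x : ℂ) ^ s * cexp (-(z * x))‖ = x ^ s.re * Real.exp (-z.re * x) := by
  simp [norm_exp, norm_cpow_eq_rpow_re_of_pos hx]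

theorem continuousOn_cpow_mul_cexp_neg_mul :
    ContinuousOn (fun x : ℝ => (x : ℂ) ^ s * cexp (-(z * x))) (Ioi 0) :=
  (continuous_ofReal.continuousOn.cpow_const fun _ hx => ofReal_mem_slitPlane.2 hx).mul
    (by fun_prop)

theorem integrableOn_rpow_mul_exp_neg_mul {q b : ℝ} (hq : -1 < q) (hb : 0 < b) :
    IntegrableOn (fun x : ℝ => x ^ q * Real.exp (-b * x)) (Ioi 0) := by
  simpa using integrableOn_rpow_mul_exp_neg_mul_rpow hq one_pos hb

theorem integrableOn_cpow_mul_cexp_neg_mul (hs : -1 < s.re) (hz : 0 < z.re) :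
    IntegrableOn (fun x : ℝ => (x : ℂ) ^ s * cexp (-(z * x))) (Ioi 0) := by
  refine (integrableOn_rpow_mul_exp_neg_mul hs hz).mono'
    (continuousOn_cpow_mul_cexp_neg_mul.aestronglyMeasurable measurableSet_Ioi) ?_
  filter_upwards [ae_restrict_mem measurableSet_Ioi] with x hx
  exact (norm_cpow_mul_cexp_neg_mul hx).le

theorem hasDerivAt_integral_cpow_mul_cexp_neg_mul (hs : -1 < s.re) (hz : 0 < z.re) :
    HasDerivAt (fun w : ℂ => ∫ x in Ioi (0 : ℝ), (x : ℂ) ^ s * cexp (-(w * x)))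
      (∫ x in Ioi (0 : ℝ), -((x : ℂ) ^ (s + 1) * cexp (-(z * x)))) z := by
  have hU : {w : ℂ | z.re / 2 < w.re} ∈ 𝓝 z :=
    (isOpen_lt continuous_const continuous_re).mem_nhds (half_lt_self hz)
  have hs' : -1 < (s + 1).re := by simp only [add_re, one_re]; linarith
  refine (hasDerivAt_integral_of_dominated_loc_of_deriv_le hU
    (F := fun w x => (x : ℂ) ^ s * cexp (-(w * x)))
    (F' := fun w x => -((x : ℂ) ^ (s + 1) * cexp (-(w * x))))
    (bound := fun x : ℝ => x ^ (s + 1).re * Real.exp (-(z.re / 2) * x))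
    (.of_forall fun w =>
      continuousOn_cpow_mul_cexp_neg_mul.aestronglyMeasurable measurableSet_Ioi)
    (integrableOn_cpow_mul_cexp_neg_mul hs hz)
    (continuousOn_cpow_mul_cexp_neg_mul.neg.aestronglyMeasurable measurableSet_Ioi)
    ?_ (integrableOn_rpow_mul_exp_neg_mul hs' (half_pos hz)) ?_).2
  · filter_upwards [ae_restrict_mem measurableSet_Ioi] with x (hx : 0 < x) w (hw : z.re / 2 < w.re)
    rw [norm_neg, norm_cpow_mul_cexp_neg_mul hx]
    gcongr
  · filter_upwards [ae_restrict_mem measurableSet_Ioi] with x (hx : 0 < x) w _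
    have hexp : HasDerivAt (fun w : ℂ => cexp (-(w * x))) (cexp (-(w * x)) * -(1 * x)) w :=
      ((hasDerivAt_id w).mul_const (x : ℂ)).neg.cexp
    convert! hexp.const_mul ((x : ℂ) ^ s) using 1
    rw [cpow_add _ _ (ofReal_ne_zero.2 hx.ne'), cpow_one]
    ring

theorem eqOn_re_pos_of_forall_ofReal_eq {F : Type*} [NormedAddCommGroup F] [NormedSpace ℂ F]
    [CompleteSpace F] {f g : ℂ → F} (hf : DifferentiableOn ℂ f {w | 0 < w.re})
    (hg : DifferentiableOn ℂ g {w | 0 < w.re}) (h : ∀ r : ℝ, 0 < r → f r = g r) :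
    EqOn f g {w | 0 < w.re} := by
  have hopen : IsOpen {w : ℂ | 0 < w.re} := isOpen_lt continuous_const continuous_re
  have htendsto : Tendsto ofReal (𝓝[>] 1) (𝓝[≠] ((1 : ℝ) : ℂ)) :=
    continuous_ofReal.continuousWithinAt.tendsto_nhdsWithin fun r (hr : 1 < r) => by
      simpa using hr.ne'
  have hnear : ∀ᶠ r : ℝ in 𝓝[>] 1, f r = g r := by
    filter_upwards [self_mem_nhdsWithin] with r (hr : 1 < r)
    exact h r (one_pos.trans hr)
  exact (hf.analyticOnNhd hopen).eqOn_of_preconnected_of_frequently_eq (hg.analyticOnNhd hopen)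
    (convex_halfSpace_re_gt 0).isPreconnected (z₀ := ((1 : ℝ) : ℂ)) (by simp)
    (htendsto.frequently hnear.frequently)

/-- Both sides are analytic in the rate `z`, so it suffices to know the formula for real `z`. -/
theorem integral_cpow_mul_cexp_neg_mul_Ioi (hs : -1 < s.re) (hz : 0 < z.re) :
    ∫ x in Ioi (0 : ℝ), (x : ℂ) ^ s * cexp (-(z * x)) = Gamma (s + 1) * (z ^ (s + 1))⁻¹ := by
  refine eqOn_re_pos_of_forall_ofReal_eq
    (f := fun w => ∫ x in Ioi (0 : ℝ), (x : ℂ) ^ s * cexp (-(w * x)))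
    (g := fun w => Gamma (s + 1) * (w ^ (s + 1))⁻¹)
    (fun w hw => (hasDerivAt_integral_cpow_mul_cexp_neg_mul hs
      hw).differentiableAt.differentiableWithinAt) ?_ (fun r hr => ?_) hz
  · simp only [← cpow_neg]
    exact (differentiableOn_id.cpow_const fun w hw => .inl hw).const_mul _
  · have hs' : 0 < (s + 1).re := by rw [add_re, one_re]; linarith
    rw [← inv_cpow_ofReal_nonneg hr.le, ← one_div, mul_comm,
      ← Complex.integral_cpow_mul_exp_neg_mul_Ioi hs' hr, add_sub_cancel_right]

end GammaIntegral

/-- The closed simplex `Δ^m` in the affine chart `ℝ^m`, that is, `stdSimplex ℝ (Fin (m + 1))` with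
the first barycentric coordinate omitted. -/
def cornerSimplex (m : ℕ) : Set (Fin m → ℝ) :=
  {t | (∀ i, 0 ≤ t i) ∧ ∑ i, t i ≤ 1}

variable {m : ℕ}

theorem fullT_nonneg_iff {t : Fin m → ℝ} : 0 ≤ fullT m t ↔ t ∈ cornerSimplex m := by
  simp [Pi.le_def, cornerSimplex, fullT, Fin.forall_fin_succ, and_comm]

theorem sum_fullT (t : Fin m → ℝ) : ∑ i, fullT m t i = 1 := by
  simp [fullT, Fin.sum_univ_succ]

theorem measurable_fullT : Measurable (fullT m) :=
  measurable_pi_lambda _ <| Fin.cases (by simp only [fullT, Fin.cons_zero]; fun_prop)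
    fun j => by simp only [fullT, Fin.cons_succ]; fun_prop

theorem measurableSet_cornerSimplex : MeasurableSet (cornerSimplex m) := by
  have h : cornerSimplex m = fullT m ⁻¹' Ici 0 := ext fun _ => fullT_nonneg_iff.symm
  exact h ▸ measurable_fullT measurableSet_Ici

theorem re_sum_fullT_mul_pos {a : Fin (m + 1) → ℂ} (ha : ∀ i, 0 < (a i).re) {t : Fin m → ℝ}
    (ht : t ∈ cornerSimplex m) : 0 < (∑ i, (fullT m t i : ℂ) * a i).re := by
  have hnonneg := fullT_nonneg_iff.2 ht
  obtain ⟨i, -, hi⟩ : ∃ i ∈ Finset.univ, 0 < fullT m t i :=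
    Finset.exists_lt_of_sum_lt (by simp [sum_fullT])
  simp only [re_sum, re_ofReal_mul]
  exact Finset.sum_pos' (fun j _ => mul_nonneg (hnonneg j) (ha j).le)
    ⟨i, Finset.mem_univ i, mul_pos hi (ha i)⟩

section ConeCoordinates

variable {E : Type*} [NormedAddCommGroup E]

/-- The measure `s ^ n ds` on `(0, ∞)`, regarded as a measure on `ℝ`: the radial part of Lebesgue
measure in the coordinates `x = s • fullT n t`. -/
noncomputable def radialMeasure (n : ℕ) : Measure ℝ :=
  (volume.restrict (Ioi 0)).withDensity fun s => ENNReal.ofReal (s ^ n)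

instance (n : ℕ) : SFinite (radialMeasure n) := by
  unfold radialMeasure
  infer_instance

theorem lintegral_radialMeasure (n : ℕ) {f : ℝ → ENNReal} (hf : Measurable f) :
    ∫⁻ s, f s ∂radialMeasure n = ∫⁻ s in Ioi 0, ENNReal.ofReal (s ^ n) * f s :=
  lintegral_withDensity_eq_lintegral_mul _ (by fun_prop) hf

theorem integral_radialMeasure [NormedSpace ℝ E] (n : ℕ) (f : ℝ → E) :
    ∫ s, f s ∂radialMeasure n = ∫ s in Ioi 0, s ^ n • f s := by
  rw [radialMeasure, integral_withDensity_eq_integral_toReal_smul (by fun_prop) (by simp)]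
  refine setIntegral_congr_fun measurableSet_Ioi fun s (hs : 0 < s) => ?_
  simp only [ENNReal.toReal_ofReal (pow_pos hs n).le]

theorem measurePreserving_cons_sub_sum (m : ℕ) :
    MeasurePreserving (fun p : (Fin m → ℝ) × ℝ =>
      (Fin.cons (p.2 - ∑ j, p.1 j) p.1 : Fin (m + 1) → ℝ)) := by
  have hshear : MeasurePreserving (fun p : (Fin m → ℝ) × ℝ => (id p.1, p.2 - ∑ j, p.1 j)) :=
    (MeasurePreserving.id (volume : Measure (Fin m → ℝ))).skew_product
      (g := fun y s => s - ∑ j, y j) (by unfold Function.uncurry; fun_prop)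
      (.of_forall fun y => map_sub_right_eq_self volume _)
  convert! ((volume_preserving_piFinSuccAbove (fun _ : Fin (m + 1) => ℝ) 0).symm.comp
    Measure.measurePreserving_swap).comp hshear using 1
  exact funext fun p => (Fin.insertNth_zero' (β := ℝ) _ _).symm

theorem cons_sub_sum_smul (s : ℝ) (t : Fin m → ℝ) :
    (Fin.cons (s - ∑ j, (s • t) j) (s • t) : Fin (m + 1) → ℝ) = s • fullT m t := by
  ext i
  refine Fin.cases ?_ (fun j => ?_) i <;> simp [fullT, mul_sub, Finset.mul_sum]

theorem volume_preimage_cons_sub_sum_of_pos {s : ℝ} (hs : 0 < s) (A : Set (Fin (m + 1) → ℝ)) :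
    volume {y : Fin m → ℝ | (Fin.cons (s - ∑ j, y j) y : Fin (m + 1) → ℝ) ∈ A} =
      ENNReal.ofReal (s ^ m) * volume {t : Fin m → ℝ | s • fullT m t ∈ A} := by
  have hscale := Measure.addHaar_preimage_smul volume hs.ne'
    {y : Fin m → ℝ | (Fin.cons (s - ∑ j, y j) y : Fin (m + 1) → ℝ) ∈ A}
  simp only [preimage_ofPred_eq, cons_sub_sum_smul, Module.finrank_fin_fun] at hscale
  have hpow : 0 < s ^ m := pow_pos hs m
  rw [hscale, ← mul_assoc, ← ENNReal.ofReal_mul hpow.le, abs_of_pos (inv_pos.2 hpow),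
    mul_inv_cancel₀ hpow.ne', ENNReal.ofReal_one, one_mul]

theorem preimage_cons_sub_sum_of_neg {s : ℝ} (hs : s < 0) :
    {y : Fin m → ℝ | (Fin.cons (s - ∑ j, y j) y : Fin (m + 1) → ℝ) ∈ Ici 0} = ∅ := by
  refine eq_empty_of_forall_notMem fun y hy => hs.not_ge ?_
  simpa [Fin.sum_univ_succ] using Finset.sum_nonneg fun i (_ : i ∈ Finset.univ) => hy i

theorem smul_fullT_nonneg_iff {s : ℝ} (hs : 0 < s) {t : Fin m → ℝ} :
    0 ≤ s • fullT m t ↔ t ∈ cornerSimplex m := by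
  rw [smul_nonneg_iff_nonneg_of_pos_left hs, fullT_nonneg_iff]

theorem measurePreserving_smul_fullT (m : ℕ) :
    MeasurePreserving (fun p : (Fin m → ℝ) × ℝ => p.2 • fullT m p.1)
      ((volume.restrict (cornerSimplex m)).prod (radialMeasure m))
      (volume.restrict (Ici (0 : Fin (m + 1) → ℝ))) := by
  have hmeas : Measurable fun p : (Fin m → ℝ) × ℝ => p.2 • fullT m p.1 :=
    measurable_snd.smul (measurable_fullT.comp measurable_fst)
  refine ⟨hmeas, Measure.ext fun A hA => ?_⟩
  have hA' : MeasurableSet (A ∩ Ici 0) := hA.inter measurableSet_Ici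
  have hcons := measurePreserving_cons_sub_sum m
  rw [Measure.map_apply hmeas hA, Measure.prod_apply_symm (hmeas hA), Measure.restrict_apply hA,
    ← hcons.measure_preimage hA'.nullMeasurableSet, Measure.volume_eq_prod,
    Measure.prod_apply_symm (hcons.measurable hA'),
    lintegral_radialMeasure m (measurable_measure_prodMk_right (hmeas hA)),
    ← lintegral_indicator measurableSet_Ioi]
  refine lintegral_congr_ae ?_
  filter_upwards [Measure.ae_ne volume (0 : ℝ)] with s hs0
  rcases lt_or_gt_of_ne hs0 with hs | hs
  · rw [indicator_of_notMem (notMem_Ioi.2 hs.le)]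
    refine (measure_mono_null (fun y hy => ?_) measure_empty).symm
    rw [← preimage_cons_sub_sum_of_neg hs]
    exact hy.2
  · rw [indicator_of_mem (mem_Ioi.2 hs),
      Measure.restrict_apply (measurable_prodMk_right (hmeas hA))]
    refine .trans ?_ (volume_preimage_cons_sub_sum_of_pos hs (A ∩ Ici 0)).symm
    congr 2
    ext t
    exact and_congr_right' (smul_fullT_nonneg_iff hs).symm

theorem setIntegral_Ici_eq_integral_cornerSimplex [NormedSpace ℝ E] {f : (Fin (m + 1) → ℝ) → E}
    (hf : IntegrableOn f (Ici 0)) :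
    ∫ x in Ici 0, f x =
      ∫ t in cornerSimplex m, ∫ s in Ioi (0 : ℝ), s ^ m • f (s • fullT m t) := by
  have hΦ := measurePreserving_smul_fullT m
  rw [← hΦ.map_eq, integral_map hΦ.aemeasurable (hΦ.map_eq ▸ hf.aestronglyMeasurable)]
  simp only [← integral_radialMeasure]
  exact integral_prod _ (hΦ.integrable_comp_of_integrable hf)

theorem setIntegral_cexp_neg_smul_homogeneous [NormedSpace ℂ E] [CompleteSpace E]
    {a : Fin (m + 1) → ℂ} (ha : ∀ i, 0 < (a i).re) {h : (Fin (m + 1) → ℝ) → E} {d : ℂ}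
    (hd : -1 < (m + d).re)
    (hh : ∀ s : ℝ, 0 < s → ∀ x, 0 ≤ x → h (s • x) = (s : ℂ) ^ d • h x)
    (hint : IntegrableOn (fun x => cexp (-∑ i, (x i : ℂ) * a i) • h x) (Ici 0)) :
    ∫ x in Ici 0, cexp (-∑ i, (x i : ℂ) * a i) • h x =
      Gamma (m + d + 1) • ∫ t in cornerSimplex m,
        ((∑ i, (fullT m t i : ℂ) * a i) ^ (m + d + 1))⁻¹ • h (fullT m t) := by
  rw [setIntegral_Ici_eq_integral_cornerSimplex hint, ← integral_smul]
  refine setIntegral_congr_fun measurableSet_cornerSimplex fun t ht => ?_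
  have hradial {s : ℝ} (hs : 0 < s) :
      s ^ m • cexp (-∑ i, ((s • fullT m t) i : ℂ) * a i) • h (s • fullT m t) =
        ((s : ℂ) ^ (m + d) * cexp (-((∑ i, (fullT m t i : ℂ) * a i) * s))) • h (fullT m t) := by
    have hlin : ∑ i, ((s • fullT m t) i : ℂ) * a i = (∑ i, (fullT m t i : ℂ) * a i) * s := by
      simp only [Pi.smul_apply, smul_eq_mul, ofReal_mul, Finset.sum_mul]
      exact Finset.sum_congr rfl fun i _ => by ring
    rw [hlin, hh s hs _ (fullT_nonneg_iff.2 ht), cpow_add _ _ (ofReal_ne_zero.2 hs.ne'),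
      cpow_natCast, ← Complex.coe_smul, smul_smul, smul_smul, ofReal_pow, mul_right_comm]
  rw [setIntegral_congr_fun measurableSet_Ioi fun s hs => hradial hs, integral_smul_const,
    integral_cpow_mul_cexp_neg_mul_Ioi hd (re_sum_fullT_mul_pos ha ht), mul_smul]

end ConeCoordinates

theorem volume_restrict_Ici_zero (ι : Type*) [Fintype ι] :
    volume.restrict (Ici (0 : ι → ℝ)) = Measure.pi fun _ => volume.restrict (Ici 0) := by
  rw [← Measure.restrict_pi_pi, pi_univ_Ici, volume_pi]
  rfl

section Monomial

variable {ι : Type*} [Fintype ι]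

theorem cexp_neg_sum_mul_prod_cpow (a k : ι → ℂ) (x : ι → ℝ) :
    cexp (-∑ i, (x i : ℂ) * a i) * ∏ i, (x i : ℂ) ^ k i =
      ∏ i, (x i : ℂ) ^ k i * cexp (-(a i * x i)) := by
  rw [← Finset.sum_neg_distrib, exp_sum, ← Finset.prod_mul_distrib]
  exact Finset.prod_congr rfl fun i _ => by rw [mul_comm, mul_comm (a i)]

theorem prod_cpow_smul (k : ι → ℂ) {s : ℝ} (hs : 0 < s) {x : ι → ℝ} (hx : 0 ≤ x) :
    ∏ i, ((s • x) i : ℂ) ^ k i = (s : ℂ) ^ (∑ i, k i) * ∏ i, (x i : ℂ) ^ k i := by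
  simp only [Pi.smul_apply, smul_eq_mul, ofReal_mul, mul_cpow_ofReal_nonneg hs.le (hx _),
    Finset.prod_mul_distrib, cpow_def_of_ne_zero (ofReal_ne_zero.2 hs.ne'), Finset.mul_sum, exp_sum]

variable {a k : ι → ℂ}

theorem integrableOn_cexp_neg_sum_mul_prod_cpow (ha : ∀ i, 0 < (a i).re)
    (hk : ∀ i, -1 < (k i).re) :
    IntegrableOn (fun x : ι → ℝ => cexp (-∑ i, (x i : ℂ) * a i) * ∏ i, (x i : ℂ) ^ k i)
      (Ici 0) := by
  simp only [IntegrableOn, cexp_neg_sum_mul_prod_cpow, volume_restrict_Ici_zero]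
  exact Integrable.fintype_prod (f := fun i (x : ℝ) => (x : ℂ) ^ k i * cexp (-(a i * x)))
    fun i => (integrableOn_Ici_iff_integrableOn_Ioi (by simp)).2
      (integrableOn_cpow_mul_cexp_neg_mul (hk i) (ha i))

theorem setIntegral_cexp_neg_sum_mul_prod_cpow (ha : ∀ i, 0 < (a i).re)
    (hk : ∀ i, -1 < (k i).re) :
    ∫ x : ι → ℝ in Ici 0, cexp (-∑ i, (x i : ℂ) * a i) * ∏ i, (x i : ℂ) ^ k i =
      ∏ i, Gamma (k i + 1) * (a i ^ (k i + 1))⁻¹ := by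
  simp only [cexp_neg_sum_mul_prod_cpow, volume_restrict_Ici_zero]
  rw [integral_fintype_prod_eq_prod fun i (x : ℝ) => (x : ℂ) ^ k i * cexp (-(a i * x))]
  simp only [integral_Ici_eq_integral_Ioi, integral_cpow_mul_cexp_neg_mul_Ioi (hk _) (ha _)]

end Monomial

theorem stmt18_general (m : ℕ) (a : Fin (m + 1) → ℂ) (ha : ∀ i, 0 < (a i).re)
    (k : Fin (m + 1) → ℂ) (hk : ∀ i, -1 < (k i).re) :
    ∫ t in {t : Fin m → ℝ | (∀ i, 0 ≤ t i) ∧ ∑ i, t i ≤ 1},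
        (∏ i, (fullT m t i : ℂ) ^ k i) *
          ((∑ i, (fullT m t i : ℂ) * a i) ^ (m + 1 + ∑ i, k i))⁻¹ =
      (∏ i, Gamma (k i + 1)) / Gamma (m + ∑ i, k i + 1) * ∏ i, (a i ^ (k i + 1))⁻¹ := by
  change ∫ t in cornerSimplex m, _ = _
  have hdeg : -1 < (m + ∑ i, k i).re := by
    have hsum : ∑ _i : Fin (m + 1), (-1 : ℝ) < ∑ i, (k i).re :=
      Finset.sum_lt_sum_of_nonempty Finset.univ_nonempty fun i _ => hk i
    simp only [Finset.sum_const, Finset.card_univ, Fintype.card_fin, nsmul_eq_mul,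
      Nat.cast_add_one] at hsum
    rw [add_re, natCast_re, re_sum]
    linarith
  have hGamma : Gamma (m + ∑ i, k i + 1) ≠ 0 :=
    Gamma_ne_zero_of_re_pos (by rw [add_re, one_re]; linarith)
  have hcone := setIntegral_cexp_neg_smul_homogeneous ha hdeg
    (fun s hs x hx => prod_cpow_smul k hs hx) (integrableOn_cexp_neg_sum_mul_prod_cpow ha hk)
  simp only [smul_eq_mul, setIntegral_cexp_neg_sum_mul_prod_cpow ha hk,
    Finset.prod_mul_distrib] at hcone
  rw [div_mul_eq_mul_div, hcone, mul_div_cancel_left₀ _ hGamma]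
  simp only [mul_comm, add_right_comm]

/-- Hurwitz formula / Feynman parametrization: for `g = m + 1 ≥ 1` complex
numbers `a i` with positive real part and exponents `k i ∈ ℕ` with `|k| = Σ k i`,
`∫_{Δ^{g-1}} (∏ tᵢ^{kᵢ}) (Σ tᵢaᵢ)^{-(g+|k|)} dt₂⋯dt_g
  = (∏ kᵢ!)/(g+|k|-1)! · ∏ aᵢ^{-(kᵢ+1)}`,
where the integral is over `{(t₂,…,t_g) : tᵢ ≥ 0, Σ tᵢ ≤ 1}` and `t₁ = 1 − Σ_{i≥2} tᵢ`. -/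
theorem stmt18 (m : ℕ) (a : Fin (m + 1) → ℂ) (ha : ∀ i, 0 < (a i).re)
    (k : Fin (m + 1) → ℕ) :
    (∫ t in {t : Fin m → ℝ | (∀ i, 0 ≤ t i) ∧ ∑ i, t i ≤ 1},
        (∏ i, ((fullT m t i : ℝ) : ℂ) ^ k i) *
          ((∑ i, ((fullT m t i : ℝ) : ℂ) * a i) ^ (m + 1 + ∑ i, k i))⁻¹)
      = ((∏ i, (Nat.factorial (k i) : ℂ)) / (Nat.factorial (m + ∑ i, k i) : ℂ)) *
          ∏ i, (a i ^ (k i + 1))⁻¹ := by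
  have h := stmt18_general m a ha (fun i => k i) (fun i => neg_one_lt_zero.trans_le (by simp))
  simp only [← Nat.cast_sum, ← Nat.cast_add, Gamma_nat_eq_factorial] at h
  exact_mod_cast h
end
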